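/- For every odd n ≥ 3, the ratio W^(1)[g_n] / W^(1)[Maj_n] equals ((n−1)/(n−2))² · ((4n−9)/(4n)). -/

import Mathlib

open Finset

namespace BKS

/-- sign function: 1 if z ≥ 0, -1 otherwise. -/
noncomputable def sgn (z : ℝ) : ℝ := if 0 ≤ z then 1 else -1

/-- encode Bool as the ±1 value of a bit. -/
def chi (b : Bool) : ℝ := if b then 1 else -1

/-- Fourier coefficient of f at S. -/
noncomputable def fourierCoeff {n : ℕ} (f : (Fin n → Bool) → ℝ) (S : Finset (Fin n)) : ℝ :=
  (1 / 2 ^ n : ℝ) * ∑ x : Fin n → Bool, f x * ∏ i ∈ S, chi (x i)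

/-- Fourier weight of f at level k: W^(k)[f]. -/
noncomputable def fourierWeight {n : ℕ} (k : ℕ) (f : (Fin n → Bool) → ℝ) : ℝ :=
  ∑ S ∈ Finset.univ.filter (fun S : Finset (Fin n) => S.card = k), (fourierCoeff f S) ^ 2

/-- Noise stability of f at ρ. -/
noncomputable def noiseStab {n : ℕ} (ρ : ℝ) (f : (Fin n → Bool) → ℝ) : ℝ :=
  ∑ k ∈ Finset.range (n + 1), ρ ^ k * fourierWeight k f

/-- Majority function on n bits. -/
noncomputable def Maj (n : ℕ) : (Fin n → Bool) → ℝ := fun x => sgn (∑ i, chi (x i))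

/-- The function g_n(x) = sgn(2(x_1 + ⋯ + x_{n-3}) + x_{n-2} + x_{n-1} + x_n). -/
noncomputable def gfun (n : ℕ) : (Fin n → Bool) → ℝ :=
  fun x => sgn (∑ i : Fin n, (if (i : ℕ) < n - 3 then (2 : ℝ) else 1) * chi (x i))

/-- f is a linear threshold function. -/
def IsLTF {n : ℕ} (f : (Fin n → Bool) → ℝ) : Prop :=
  ∃ (w0 : ℝ) (w : Fin n → ℝ), ∀ x, f x = sgn (w0 + ∑ i, w i * chi (x i))


lemma weight_one {n : ℕ} (f : (Fin n → Bool) → ℝ) :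
    fourierWeight 1 f = ∑ i : Fin n, ((1 / 2 ^ n : ℝ) * ∑ x, f x * chi (x i)) ^ 2 := by
  unfold fourierWeight
  rw [Finset.univ_filter_card_eq, Finset.powersetCard_one, Finset.sum_map]
  simp [fourierCoeff]

/-- distribution of the sum of the bits -/
lemma sum_dist (m : ℕ) (F : ℝ → ℝ) :
    ∑ y : Fin m → Bool, F (∑ i, chi (y i)) =
      ∑ j ∈ range (m + 1), (m.choose j : ℝ) * F (2 * j - m) := by
  have h := Finset.sum_powerset_apply_card (fun j : ℕ => F (2 * j - m)) (x := (univ : Finset (Fin m)))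
  simp only [card_univ, Fintype.card_fin, nsmul_eq_mul] at h
  rw [← h]
  refine Finset.sum_bij' (fun y _ => univ.filter (fun i => y i = true))
    (fun S _ => fun i => decide (i ∈ S)) ?_ ?_ ?_ ?_ ?_
  · intros; simp
  · intros; simp
  · intro y _; funext i; simp
  · intro S _; ext i; simp
  · intro y _
    congr 1
    have : ∀ i, chi (y i) = 2 * (if y i = true then (1 : ℝ) else 0) - 1 := by
      intro i; unfold chi; split_ifs <;> norm_num
    simp only [this, Finset.sum_sub_distrib, ← Finset.mul_sum, Finset.sum_boole]
    simp

lemma sum_split (m : ℕ) (F : ℝ → ℝ) (i : Fin (m + 1)) :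
    ∑ y : Fin (m + 1) → Bool, F (∑ l, chi (y l)) * chi (y i) =
      ∑ y : Fin m → Bool, (F (∑ l, chi (y l) + 1) - F (∑ l, chi (y l) - 1)) := by
  rw [← (Fin.insertNthEquiv (fun _ => Bool) i).sum_comp, Fintype.sum_prod_type]
  simp only [Fintype.sum_bool, Fin.insertNthEquiv_apply, Fin.sum_univ_succAbove _ i,
    Fin.insertNth_apply_same, Fin.insertNth_apply_succAbove]
  rw [← Finset.sum_add_distrib]
  refine Finset.sum_congr rfl fun y _ => ?_
  simp only [chi, if_true, Bool.false_eq_true, if_false]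
  rw [add_comm (1 : ℝ), add_comm (-1 : ℝ), ← sub_eq_add_neg]
  ring

lemma sum_three (F : (Fin 3 → Bool) → ℝ) :
    ∑ b, F b = ∑ p : Bool, ∑ q : Bool, ∑ r : Bool, F ![p, q, r] := by
  rw [← (Fin.consEquiv (fun _ : Fin 3 => Bool)).sum_comp, Fintype.sum_prod_type]
  refine Finset.sum_congr rfl fun p _ => ?_
  rw [← (Fin.consEquiv (fun _ : Fin 2 => Bool)).sum_comp, Fintype.sum_prod_type]
  refine Finset.sum_congr rfl fun q _ => ?_
  rw [← (Fin.consEquiv (fun _ : Fin 1 => Bool)).sum_comp, Fintype.sum_prod_type]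
  refine Finset.sum_congr rfl fun r _ => ?_
  simp only [Finset.univ_unique, Finset.sum_singleton]
  congr 1

lemma sgn_pos {z : ℝ} (h : 0 ≤ z) : sgn z = 1 := by simp [sgn, h]
lemma sgn_neg {z : ℝ} (h : z < 0) : sgn z = -1 := by simp [sgn, not_le.mpr h]

/-- majority coefficient -/
lemma maj_coeff (K : ℕ) (i : Fin (2 * K + 1)) :
    ∑ x, Maj (2 * K + 1) x * chi (x i) = 2 * ((2 * K).choose K : ℝ) := by
  unfold Maj
  rw [sum_split, sum_dist (2 * K) (fun t => sgn (t + 1) - sgn (t - 1)),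
    Finset.sum_eq_single K]
  · push_cast
    rw [sgn_pos (by linarith), sgn_neg (by linarith)]; ring
  · intro j _ hj
    push_cast
    rcases lt_or_gt_of_ne hj with h | h
    · have : (j : ℝ) + 1 ≤ K := by exact_mod_cast h
      rw [sgn_neg (by linarith), sgn_neg (by linarith)]; ring
    · have : (K : ℝ) + 1 ≤ j := by exact_mod_cast h
      rw [sgn_pos (by linarith), sgn_pos (by linarith)]; ring
  · intro h; exact absurd (by simp; omega) h

lemma g_split (m : ℕ) (G : (Fin (m + 3) → Bool) → ℝ) :
    ∑ x, gfun (m + 3) x * G x =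
      ∑ a : Fin m → Bool, ∑ b : Fin 3 → Bool,
        sgn (2 * ∑ i, chi (a i) + ∑ i, chi (b i)) * G (Fin.append a b) := by
  rw [← (Fin.appendEquiv m 3).sum_comp, Fintype.sum_prod_type]
  refine Finset.sum_congr rfl fun a _ => Finset.sum_congr rfl fun b _ => ?_
  unfold gfun
  simp only [Fin.appendEquiv, Equiv.coe_fn_mk]
  rw [Fin.sum_univ_add]
  simp [Finset.mul_sum]

/-- sum of the signs over the three light bits -/
noncomputable def H (t : ℝ) : ℝ := ∑ b : Fin 3 → Bool, sgn (2 * t + ∑ i, chi (b i))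

lemma H_eq (t : ℝ) : H t = sgn (2 * t + 3) + 3 * sgn (2 * t + 1) + 3 * sgn (2 * t - 1)
    + sgn (2 * t - 3) := by
  unfold H
  rw [sum_three]
  simp only [Fintype.sum_bool, Fin.sum_univ_three, chi]
  simp
  ring_nf

lemma H_pos {t : ℝ} (h : 2 ≤ t) : H t = 8 := by
  rw [H_eq, sgn_pos, sgn_pos, sgn_pos, sgn_pos] <;> linarith
lemma H_neg {t : ℝ} (h : t ≤ -2) : H t = -8 := by
  rw [H_eq, sgn_neg, sgn_neg, sgn_neg, sgn_neg] <;> linarith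
lemma H_zero {t : ℝ} (h : t = 0) : H t = 0 := by
  rw [H_eq, sgn_pos, sgn_pos, sgn_neg, sgn_neg] <;> linarith

lemma g_big (q : ℕ) (i : Fin (2 * q + 1 + 1)) :
    ∑ x, gfun (2 * q + 1 + 1 + 3) x * chi (x (Fin.castAdd 3 i)) =
      8 * ((2 * q + 2).choose (q + 1) : ℝ) := by
  rw [g_split _ (fun x => chi (x (Fin.castAdd 3 i)))]
  simp only [Fin.append_left, ← Finset.sum_mul]
  change ∑ a : Fin (2 * q + 1 + 1) → Bool, H (∑ l, chi (a l)) * chi (a i) = _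
  rw [sum_split (2 * q + 1) H i, sum_dist (2 * q + 1) (fun t => H (t + 1) - H (t - 1))]
  have key : ∀ j ∈ range (2 * q + 1 + 1),
      ((2 * q + 1).choose j : ℝ) * (H (2 * j - (2 * q + 1 : ℕ) + 1) - H (2 * j - (2 * q + 1 : ℕ) - 1))
      = (if j = q then 8 * ((2 * q + 1).choose j : ℝ) else 0) +
        (if j = q + 1 then 8 * ((2 * q + 1).choose j : ℝ) else 0) := by
    intro j _
    push_cast
    rcases lt_trichotomy j q with h | h | h
    · have : (j : ℝ) + 1 ≤ q := by exact_mod_cast h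
      rw [H_neg (by linarith), H_neg (by linarith), if_neg (by omega), if_neg (by omega)]; ring
    · subst h
      rw [H_zero (by ring), H_neg (by linarith), if_pos rfl, if_neg (by omega)]; ring
    · rcases (Nat.succ_le_of_lt h).eq_or_lt with h' | h'
      · have : j = q + 1 := h'.symm
        subst this
        push_cast
        rw [H_zero (t := 2 * ((q : ℝ) + 1) - (2 * q + 1) - 1) (by ring), H_pos (by linarith),
          if_neg (by omega), if_pos rfl]; ring
      · have : (q : ℝ) + 1 + 1 ≤ j := by exact_mod_cast h'
        rw [H_pos (by linarith), H_pos (by linarith), if_neg (by omega), if_neg (by omega)]; ring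
  rw [Finset.sum_congr rfl key, Finset.sum_add_distrib, Finset.sum_ite_eq', Finset.sum_ite_eq',
    if_pos (by simp; omega), if_pos (by simp; omega)]
  rw [show 2 * q + 2 = (2 * q + 1) + 1 by ring, Nat.choose_succ_succ' (2 * q + 1) q]
  push_cast
  ring

lemma g_small_aux (t : ℝ) (j : Fin 3) :
    ∑ b : Fin 3 → Bool, sgn (2 * t + ∑ i, chi (b i)) * chi (b j) =
      sgn (2 * t + 3) + sgn (2 * t + 1) - sgn (2 * t - 1) - sgn (2 * t - 3) := by
  rw [sum_three]
  simp only [Fintype.sum_bool, Fin.sum_univ_three, chi]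
  fin_cases j <;> simp <;> ring_nf

lemma g_small (k : ℕ) (j : Fin 3) :
    ∑ x, gfun (2 * k + 3) x * chi (x (Fin.natAdd (2 * k) j)) =
      4 * ((2 * k).choose k : ℝ) := by
  rw [g_split _ (fun x => chi (x (Fin.natAdd (2 * k) j)))]
  simp only [Fin.append_right, g_small_aux]
  rw [sum_dist (2 * k) (fun t => sgn (2 * t + 3) + sgn (2 * t + 1) - sgn (2 * t - 1)
    - sgn (2 * t - 3)), Finset.sum_eq_single k]
  · push_cast
    rw [sgn_pos, sgn_pos, sgn_neg, sgn_neg] <;> linarith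
  · intro j _ hj
    push_cast
    rcases lt_or_gt_of_ne hj with h | h
    · have : (j : ℝ) + 1 ≤ k := by exact_mod_cast h
      rw [sgn_neg, sgn_neg, sgn_neg, sgn_neg] <;> linarith
    · have : (k : ℝ) + 1 ≤ j := by exact_mod_cast h
      rw [sgn_pos, sgn_pos, sgn_pos, sgn_pos] <;> linarith
  · intro h; exact absurd (by simp; omega) h

lemma g_big' (k : ℕ) (i : Fin (2 * k)) :
    ∑ x, gfun (2 * k + 3) x * chi (x (Fin.castAdd 3 i)) = 8 * ((2 * k).choose k : ℝ) := by
  cases k with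
  | zero => exact i.elim0
  | succ q => exact g_big q i

theorem stmt5 (n : ℕ) (hn : Odd n) (h3 : 3 ≤ n) :
    fourierWeight 1 (gfun n) / fourierWeight 1 (Maj n) =
      (((n : ℝ) - 1) / ((n : ℝ) - 2)) ^ 2 * ((4 * (n : ℝ) - 9) / (4 * (n : ℝ))) := by
  obtain ⟨k, rfl⟩ : ∃ k, n = 2 * k + 3 := by
    obtain ⟨r, hr⟩ := hn
    exact ⟨r - 1, by omega⟩
  have hM : fourierWeight 1 (Maj (2 * k + 3)) =
      (2 * k + 3) * ((1 / 2 ^ (2 * k + 3) : ℝ) * (2 * ((2 * (k + 1)).choose (k + 1) : ℝ))) ^ 2 := by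
    rw [weight_one, Finset.sum_congr rfl fun i _ => by
      rw [show ∑ x, Maj (2 * k + 3) x * chi (x i) = _ from maj_coeff (k + 1) i]]
    simp
  have hG : fourierWeight 1 (gfun (2 * k + 3)) =
      2 * k * ((1 / 2 ^ (2 * k + 3) : ℝ) * (8 * ((2 * k).choose k : ℝ))) ^ 2 +
      3 * ((1 / 2 ^ (2 * k + 3) : ℝ) * (4 * ((2 * k).choose k : ℝ))) ^ 2 := by
    rw [weight_one, Fin.sum_univ_add]
    simp only [g_big', g_small]
    simp
  have hc : ((k : ℝ) + 1) * ((2 * (k + 1)).choose (k + 1) : ℝ) =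
      2 * (2 * k + 1) * ((2 * k).choose k : ℝ) := by
    have := Nat.succ_mul_centralBinom_succ k
    simp only [Nat.centralBinom] at this
    exact_mod_cast this
  have hpos : (0 : ℝ) < ((2 * k).choose k : ℝ) := by
    exact_mod_cast Nat.choose_pos (by omega)
  have hk : (0 : ℝ) < (k : ℝ) + 1 := by positivity
  have hc' : ((2 * (k + 1)).choose (k + 1) : ℝ) =
      2 * (2 * k + 1) * ((2 * k).choose k : ℝ) / ((k : ℝ) + 1) := by
    rw [eq_div_iff hk.ne', ← hc]; ring
  rw [hM, hG, hc']
  generalize ((2 * k).choose k : ℝ) = c at *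
  push_cast
  have h1 : (2 * (k : ℝ) + 3 - 2) = 2 * k + 1 := by ring
  have h2 : (2 * (k : ℝ) + 3 - 1) = 2 * (k + 1) := by ring
  have h4 : (2 * (k : ℝ) + 1) ≠ 0 := by positivity
  have h5 : (2 * (k : ℝ) + 3) ≠ 0 := by positivity
  rw [h1, h2]
  field_simp
  ring

end BKS
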